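/- Let n ∈ ℕ and b, c : Fin n → Fin 4, and suppose there exists a coordinate i with c i = 0 and b i ≠ 0. Then Σ_{a : c ◁ a} (−1)^{N(a,b)} = 0, where the sum ranges over all a : Fin n → Fin 4 with c ◁ a and N(a,b) is the number of coordinates at which a and b anticommute. -/

import Mathlib

/-!
The sum factorizes over coordinates: the strings `a` with `c ◁ a` form a product set, and
`(-1) ^ N(a, b)` is the product of the single-qubit signs. At a coordinate where `c` is the
identity and `b` is not, the factor is a sum over all four labels, two of which commute
with `b i` and two of which anticommute with it, so it vanishes.
-/

/-- `b` is majorized by `a` (`b ◁ a`): on the support of `b`, `a` agrees with `b`. -/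
def pauliMaj {n : ℕ} (b a : Fin n → Fin 4) : Prop :=
  ∀ i, b i ≠ 0 → a i = b i

instance {n : ℕ} (b a : Fin n → Fin 4) : Decidable (pauliMaj b a) :=
  inferInstanceAs (Decidable (∀ i, b i ≠ 0 → a i = b i))

/-- Two single-qubit Pauli labels anticommute iff both are non-identity and distinct. -/
def pauliAnti (p q : Fin 4) : Prop := p ≠ 0 ∧ q ≠ 0 ∧ p ≠ q

instance (p q : Fin 4) : Decidable (pauliAnti p q) :=
  inferInstanceAs (Decidable (p ≠ 0 ∧ q ≠ 0 ∧ p ≠ q))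

/-- The number of coordinates at which two Pauli strings anticommute. -/
def pauliN {n : ℕ} (a b : Fin n → Fin 4) : ℕ :=
  (Finset.univ.filter (fun i => pauliAnti (a i) (b i))).card

/-- The vanishing factor: a non-identity Pauli label commutes with exactly two of the four labels. -/
lemma sum_pauli_sign_eq_zero (q : Fin 4) (hq : q ≠ 0) :
    ∑ p : Fin 4, (if pauliAnti p q then (-1 : ℝ) else 1) = 0 := by
  fin_cases q <;> simp_all [Fin.sum_univ_four, pauliAnti]

lemma neg_one_pow_pauliN {n : ℕ} (a b : Fin n → Fin 4) :
    (-1 : ℝ) ^ pauliN a b = ∏ j, (if pauliAnti (a j) (b j) then (-1 : ℝ) else 1) := by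
  simp [pauliN, Finset.prod_ite]

lemma filter_pauliMaj_eq_piFinset {n : ℕ} (c : Fin n → Fin 4) :
    Finset.univ.filter (fun a => pauliMaj c a) =
      Fintype.piFinset (fun j => Finset.univ.filter (fun p => c j ≠ 0 → p = c j)) := by
  ext a
  simp only [Finset.mem_filter, Finset.mem_univ, true_and, Fintype.mem_piFinset]
  rfl

/-- If `c` has an identity coordinate where `b` is non-identity, then
`Σ_{a : c ◁ a} (−1)^{N(a,b)} = 0`: exactly half of the Paulis majorizing `c`
commute with `b`. -/
theorem fourier_coefficient_cancellation (n : ℕ) (b c : Fin n → Fin 4)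
    (h : ∃ i, c i = 0 ∧ b i ≠ 0) :
    (∑ a ∈ Finset.univ.filter (fun a => pauliMaj c a),
        (-1 : ℝ) ^ (pauliN a b)) = 0 := by
  obtain ⟨i, hc, hb⟩ := h
  simp_rw [neg_one_pow_pauliN, filter_pauliMaj_eq_piFinset]
  rw [← Finset.prod_univ_sum (fun j => Finset.univ.filter (fun p => c j ≠ 0 → p = c j))
    (fun j p => if pauliAnti p (b j) then (-1 : ℝ) else 1)]
  refine Finset.prod_eq_zero (Finset.mem_univ i) ?_
  simpa [hc] using sum_pauli_sign_eq_zero (b i) hb
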